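/- Let h* : [0,1]^K → ℝ be square-integrable with mean τ, main effects α_k, and residual r (functional ANOVA decomposition), and let (Z_1, ..., Z_N) be a Latin hypercube sample of size N from the uniform distribution on [0,1]^K with estimator τ̂ = N^{-1} Σ_j h*(Z_j). Then Var(τ̂) under the Latin hypercube design equals (1/N) ∫_{[0,1]^K} r(z)² dz + o(1/N) as N → ∞. In particular, asymptotically Var_LHS(τ̂) ≤ Var_SRS(τ̂) = (1/N)(∫ r² + Σ_k ∫_0^1 α_k²) + o(1/N), with strict asymptotic improvement unless all main effects vanish. -/

import Mathlib

open MeasureTheory ProbabilityTheory Set Filter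

/-- The uniform distribution on `[0,1]`. -/
noncomputable def unif : Measure ℝ := (volume : Measure ℝ).restrict (Icc 0 1)

/-- The uniform distribution on the unit cube `[0,1]^K`. -/
noncomputable def cube (K : ℕ) : Measure (Fin K → ℝ) := Measure.pi fun _ => unif

instance (N : ℕ) : MeasurableSpace (Equiv.Perm (Fin N)) := ⊤

/-- Sample space for a Latin hypercube sample of size `N` in dimension `K`:
independent uniform permutations `P_k` and i.i.d. uniforms `U_{jk}`. -/
abbrev LHSOmega (K N : ℕ) := (Fin K → Equiv.Perm (Fin N)) × (Fin K → Fin N → ℝ)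

/-- The probability measure generating a Latin hypercube sample. -/
noncomputable def lhsMeasure (K N : ℕ) : Measure (LHSOmega K N) :=
  (Measure.pi fun _ : Fin K => (PMF.uniformOfFintype (Equiv.Perm (Fin N))).toMeasure).prod
    (Measure.pi fun _ : Fin K => Measure.pi fun _ : Fin N =>
      (volume : Measure ℝ).restrict (Icc 0 1))

/-- The `k`-th coordinate of the `j`-th row of the Latin hypercube sample:
`Z_{jk} = (P_k(j) - U_{jk})/N` (with `P_k(j) ∈ {1,…,N}` represented as `σ_k j + 1`). -/
noncomputable def lhsZ (K N : ℕ) (ω : LHSOmega K N) (j : Fin N) (k : Fin K) : ℝ :=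
  (((ω.1 k j : ℕ) + 1 : ℝ) - ω.2 k j) / N

instance : IsProbabilityMeasure unif :=
  ⟨by simp [unif]⟩

instance (K : ℕ) : IsProbabilityMeasure (cube K) := by
  unfold cube; infer_instance

lemma integrable_of_measurable_of_bound {X : Type*} [MeasurableSpace X] {μ : Measure X}
    [IsFiniteMeasure μ] {f : X → ℝ} (hf : Measurable f) {C : ℝ} (hC : ∀ x, |f x| ≤ C) :
    Integrable f μ :=
  Integrable.of_bound hf.aestronglyMeasurable C (.of_forall fun x => by simpa using hC x)

lemma abs_integral_le_of_bound {X : Type*} [MeasurableSpace X] {μ : Measure X}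
    [IsProbabilityMeasure μ] {f : X → ℝ} {C : ℝ} (hC : ∀ x, |f x| ≤ C) :
    |∫ x, f x ∂μ| ≤ C := by
  simpa using norm_integral_le_of_norm_le_const (μ := μ) (f := f) (C := C) (.of_forall hC)

lemma abs_mul_le_of_bound {a b A B : ℝ} (ha : |a| ≤ A) (hb : |b| ≤ B) : |a * b| ≤ A * B := by
  rw [abs_mul]
  exact mul_le_mul ha hb (abs_nonneg _) ((abs_nonneg _).trans ha)

/-- Averaging over independent uniform elements of a finite type, one for each coordinate. -/
lemma integral_pi_uniform_prod {A : Type*} [Fintype A] [Nonempty A] [MeasurableSpace A]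
    [DiscreteMeasurableSpace A] {K : ℕ} {X : Type*} [MeasurableSpace X] {ν : Measure X}
    [IsFiniteMeasure ν] {F : (Fin K → A) × X → ℝ} (hF : Measurable F) {C : ℝ}
    (hC : ∀ x, |F x| ≤ C) :
    ∫ x, F x ∂((Measure.pi fun _ : Fin K => (PMF.uniformOfFintype A).toMeasure).prod ν)
      = ((Fintype.card A : ℝ) ^ K)⁻¹ * ∑ a : Fin K → A, ∫ x, F (a, x) ∂ν := by
  rw [integral_prod _ (integrable_of_measurable_of_bound hF hC),
    integral_fintype .of_finite, Finset.mul_sum]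
  refine Finset.sum_congr rfl fun a _ => ?_
  rw [smul_eq_mul]
  congr 1
  rw [measureReal_def, Measure.pi_singleton]
  simp [PMF.toMeasure_apply_singleton _ _ (MeasurableSet.singleton _)]

lemma integral_unif_eq_sum {N : ℕ} [NeZero N] {f : ℝ → ℝ} (hf : Measurable f) {C : ℝ}
    (hC : ∀ x, |f x| ≤ C) :
    ∫ t, f t ∂unif = (N : ℝ)⁻¹ * ∑ a : Fin N, ∫ u, f (((a : ℕ) + 1 - u) / N) ∂unif := by
  have hN : (N : ℝ) ≠ 0 := Nat.cast_ne_zero.2 (NeZero.ne N)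
  have hloc : ∀ a b : ℝ, IntervalIntegrable f volume a b := fun a b => by
    rw [intervalIntegrable_iff]
    exact Measure.integrableOn_of_bounded (M := C) (by simp) hf.aestronglyMeasurable
      (.of_forall hC)
  have hI : ∀ g : ℝ → ℝ, ∫ t, g t ∂unif = ∫ t in (0 : ℝ)..1, g t := fun g => by
    rw [unif, integral_Icc_eq_integral_Ioc, intervalIntegral.integral_of_le zero_le_one]
  have key := intervalIntegral.sum_integral_adjacent_intervals (f := f) (μ := volume)
    (a := fun k : ℕ => (k : ℝ) / N) (n := N) fun k _ => hloc _ _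
  simp only [CharP.cast_eq_zero, zero_div, div_self hN] at key
  rw [hI, ← key, Finset.mul_sum, Finset.sum_range]
  refine Finset.sum_congr rfl fun a _ => ?_
  rw [hI]
  simp_rw [sub_div _ _ (N : ℝ)]
  rw [intervalIntegral.integral_comp_sub_div _ hN, smul_eq_mul, inv_mul_cancel_left₀ hN]
  congr 1 <;> push_cast <;> ring

/-- The point of the grid cell `c` (of side `1 / N`) with relative position `u`. -/
noncomputable def cellPt {K : ℕ} (N : ℕ) (c : Fin K → Fin N) (u : Fin K → ℝ) : Fin K → ℝ :=
  fun k => ((c k : ℕ) + 1 - u k) / N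

/-- The average of `g` over the grid cell `c`. -/
noncomputable def cellAvg {K N : ℕ} (g : (Fin K → ℝ) → ℝ) (c : Fin K → Fin N) : ℝ :=
  ∫ u, g (cellPt N c u) ∂cube K

lemma measurable_cellPt {K N : ℕ} (c : Fin K → Fin N) : Measurable (cellPt N c) := by
  unfold cellPt; fun_prop

lemma abs_cellAvg_le {K N : ℕ} {g : (Fin K → ℝ) → ℝ} {C : ℝ} (hC : ∀ z, |g z| ≤ C)
    (c : Fin K → Fin N) : |cellAvg g c| ≤ C :=
  abs_integral_le_of_bound fun _ => hC _

lemma measurePreserving_cellPt_one (N : ℕ) [NeZero N] :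
    MeasurePreserving (fun x : Fin N × ℝ => ((x.1 : ℕ) + 1 - x.2) / (N : ℝ))
      ((PMF.uniformOfFintype (Fin N)).toMeasure.prod unif) unif := by
  have hm : Measurable (fun x : Fin N × ℝ => ((x.1 : ℕ) + 1 - x.2) / (N : ℝ)) := by
    fun_prop
  refine ⟨hm, Measure.ext fun s hs => ?_⟩
  have : IsProbabilityMeasure (((PMF.uniformOfFintype (Fin N)).toMeasure.prod unif).map
      (fun x : Fin N × ℝ => ((x.1 : ℕ) + 1 - x.2) / (N : ℝ))) :=
    Measure.isProbabilityMeasure_map hm.aemeasurable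
  rw [← measureReal_eq_measureReal_iff]
  have hs1 : Measurable (s.indicator (1 : ℝ → ℝ)) := measurable_one.indicator hs
  have hb : ∀ x, |s.indicator (1 : ℝ → ℝ) x| ≤ 1 := fun x => by
    by_cases h : x ∈ s <;> simp [h]
  rw [← integral_indicator_one hs, ← integral_indicator_one hs,
    integral_map hm.aemeasurable hs1.aestronglyMeasurable, integral_unif_eq_sum (N := N) hs1 hb,
    integral_prod _ (integrable_of_measurable_of_bound
      (f := fun x : Fin N × ℝ => s.indicator 1 (((x.1 : ℕ) + 1 - x.2) / (N : ℝ))) (hs1.comp hm) fun _ => hb _),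
    integral_fintype .of_finite, Finset.mul_sum]
  refine Finset.sum_congr rfl fun a _ => ?_
  simp [measureReal_def, PMF.toMeasure_apply_singleton _ _ (MeasurableSet.singleton _)]

lemma integral_cube_eq_sum {K N : ℕ} [NeZero N] {φ : (Fin K → ℝ) → ℝ} (hφ : Measurable φ) {C : ℝ}
    (hC : ∀ z, |φ z| ≤ C) :
    ∫ z, φ z ∂cube K = ((N : ℝ) ^ K)⁻¹ * ∑ c : Fin K → Fin N, cellAvg φ c := by
  have h1 := measurePreserving_pi (fun _ : Fin K => (PMF.uniformOfFintype (Fin N)).toMeasure.prod unif)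
    (fun _ => unif) (fun _ => measurePreserving_cellPt_one N)
  have h2 := measurePreserving_arrowProdEquivProdArrow (Fin N) ℝ (Fin K)
    (fun _ => (PMF.uniformOfFintype (Fin N)).toMeasure) (fun _ => unif)
  have h3 := h1.comp h2.symm
  have hm : Measurable fun x : (Fin K → Fin N) × (Fin K → ℝ) => cellPt N x.1 x.2 := by
    unfold cellPt; fun_prop
  have := integral_pi_uniform_prod (ν := cube K) (hφ.comp hm) (fun _ => hC _)
  simp only [Function.comp_apply, Fintype.card_fin] at this
  unfold cellAvg
  rw [← this]
  conv_lhs => rw [cube, ← h3.map_eq, integral_map h3.aemeasurable hφ.aestronglyMeasurable]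
  rfl

lemma measurePreserving_update {K : ℕ} (k : Fin K) :
    MeasurePreserving (fun x : ℝ × (Fin K → ℝ) => Function.update x.2 k x.1)
      (unif.prod (cube K)) (cube K) := by
  have hm : Measurable fun x : ℝ × (Fin K → ℝ) => Function.update x.2 k x.1 := by
    refine measurable_pi_iff.2 fun l => ?_
    rcases eq_or_ne l k with rfl | hl
    · simpa using measurable_fst
    · simp only [Function.update_of_ne hl]
      fun_prop
  refine ⟨hm, (Measure.pi_eq fun s hs => ?_).symm⟩
  have hpre : (fun x : ℝ × (Fin K → ℝ) => Function.update x.2 k x.1) ⁻¹' univ.pi s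
      = s k ×ˢ univ.pi (Function.update s k univ) := by
    ext ⟨t, z⟩
    simp only [mem_preimage, Set.mem_pi, mem_univ, true_imp_iff, mem_prod]
    constructor
    · intro h
      refine ⟨by simpa using h k, fun l => ?_⟩
      rcases eq_or_ne l k with rfl | hl
      · simp
      · simpa [hl] using h l
    · rintro ⟨h1, h2⟩ l
      rcases eq_or_ne l k with rfl | hl
      · simpa using h1
      · simpa [hl] using h2 l
  rw [Measure.map_apply hm (.univ_pi hs), hpre, Measure.prod_prod, cube, Measure.pi_pi,
    ← Finset.mul_prod_erase _ _ (Finset.mem_univ k),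
    ← Finset.mul_prod_erase _ (fun i => unif (s i)) (Finset.mem_univ k)]
  simp only [Function.update_self, measure_univ, one_mul]
  congr 1
  refine Finset.prod_congr rfl fun l hl => ?_
  rw [Function.update_of_ne (Finset.ne_of_mem_erase hl)]

lemma integral_cube_update {K : ℕ} (k : Fin K) {φ : (Fin K → ℝ) → ℝ} (hφ : Measurable φ) {C : ℝ}
    (hC : ∀ z, |φ z| ≤ C) :
    ∫ z, φ z ∂cube K = ∫ t, ∫ z, φ (Function.update z k t) ∂cube K ∂unif := by
  have h := measurePreserving_update k
  conv_lhs => rw [← h.map_eq, integral_map h.aemeasurable hφ.aestronglyMeasurable]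
  exact integral_prod _ (integrable_of_measurable_of_bound (hφ.comp h.measurable) fun _ => hC _)

/-- Two distinct columns of an array of independent uniform variables are independent and uniform
on the cube. -/
lemma measurePreserving_columns {K N : ℕ} {i j : Fin N} (hij : i ≠ j) :
    MeasurePreserving (fun u : Fin K → Fin N → ℝ => (fun k => u k i, fun k => u k j))
      (Measure.pi fun _ => Measure.pi fun _ => unif) ((cube K).prod (cube K)) := by
  have h0 : MeasurePreserving (fun v : Fin N → ℝ => (v i, v j)) (Measure.pi fun _ => unif)
      (unif.prod unif) := by
    refine ⟨by fun_prop, ?_⟩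
    have hi := (iIndepFun_pi (μ := fun _ : Fin N => unif) (X := fun _ x => x)
      fun _ => aemeasurable_id).indepFun hij
    rw [hi.map_prod_eq_prod_map_map (measurable_pi_apply i).aemeasurable
      (measurable_pi_apply j).aemeasurable]
    rw [(measurePreserving_eval _ i).map_eq, (measurePreserving_eval _ j).map_eq]
  have h1 := measurePreserving_pi (fun _ : Fin K => Measure.pi fun _ : Fin N => unif)
    (fun _ => unif.prod unif) (fun _ => h0)
  exact (measurePreserving_arrowProdEquivProdArrow ℝ ℝ (Fin K)
    (fun _ => unif) (fun _ => unif)).comp h1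

lemma measurePreserving_column {K N : ℕ} (i : Fin N) :
    MeasurePreserving (fun (u : Fin K → Fin N → ℝ) k => u k i)
      (Measure.pi fun _ => Measure.pi fun _ => unif) (cube K) :=
  measurePreserving_pi (fun _ : Fin K => Measure.pi fun _ : Fin N => unif)
    (fun _ => unif) (fun _ => measurePreserving_eval _ i)

lemma card_mul_sum_smul_eq {G S : Type*} [Group G] [Fintype G] [MulAction G S] {T : Finset S}
    (hinv : ∀ g : G, ∀ s ∈ T, g • s ∈ T) (htrans : ∀ s ∈ T, ∀ t ∈ T, ∃ g : G, g • s = t)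
    (F : S → ℝ) {s : S} (hs : s ∈ T) :
    (T.card : ℝ) * ∑ g : G, F (g • s) = Fintype.card G * ∑ t ∈ T, F t := by
  have h1 : ∀ t ∈ T, ∑ g : G, F (g • t) = ∑ g : G, F (g • s) := fun t ht => by
    obtain ⟨p, rfl⟩ := htrans s hs t ht
    simp_rw [smul_smul]
    exact Equiv.sum_comp (Equiv.mulRight p) fun g => F (g • s)
  have h2 : ∀ g : G, ∑ t ∈ T, F (g • t) = ∑ t ∈ T, F t := fun g =>
    Finset.sum_nbij' (g • ·) (g⁻¹ • ·) (hinv g) (hinv g⁻¹) (by simp) (by simp) (by simp)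
  rw [← nsmul_eq_mul, ← Finset.sum_const, ← Finset.sum_congr rfl h1, Finset.sum_comm]
  simp [h2]

lemma sum_perm_apply {K N : ℕ} (F : (Fin K → Fin N) → ℝ) (j : Fin N) :
    (N : ℝ) ^ K * ∑ σ : Fin K → Equiv.Perm (Fin N), F (fun k => σ k j)
      = (N.factorial : ℝ) ^ K * ∑ c : Fin K → Fin N, F c := by
  have h := card_mul_sum_smul_eq (G := Fin K → Equiv.Perm (Fin N)) (T := Finset.univ)
    (fun _ _ _ => Finset.mem_univ _)
    (fun s _ t _ => ⟨fun k => Equiv.swap (s k) (t k), by ext k; simp⟩)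
    F (Finset.mem_univ fun _ => j)
  simpa [Fintype.card_perm, Pi.smul_def'] using h

/-- The indicator that `c` and `d` agree in coordinate `k`. -/
noncomputable def agree {K N : ℕ} (c d : Fin K → Fin N) (k : Fin K) : ℝ :=
  if c k = d k then 1 else 0

lemma agree_nonneg {K N : ℕ} (c d : Fin K → Fin N) (k : Fin K) : 0 ≤ agree c d k := by
  unfold agree; split_ifs <;> norm_num

lemma agree_le_one {K N : ℕ} (c d : Fin K → Fin N) (k : Fin K) : agree c d k ≤ 1 := by
  unfold agree; split_ifs <;> norm_num

lemma prod_one_sub_agree {K N : ℕ} (c d : Fin K → Fin N) :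
    ∏ k, (1 - agree c d k) = if ∀ k, c k ≠ d k then 1 else 0 := by
  split_ifs with h
  · exact Finset.prod_eq_one fun k _ => by simp [agree, h k]
  · push Not at h
    obtain ⟨k, hk⟩ := h
    exact Finset.prod_eq_zero (Finset.mem_univ k) (by simp [agree, hk])

lemma sum_prod_one_sub_agree {K N : ℕ} (c : Fin K → Fin N) :
    ∑ d : Fin K → Fin N, ∏ k, (1 - agree c d k) = ((N : ℝ) - 1) ^ K := by
  have h := Finset.prod_univ_sum (fun _ : Fin K => (Finset.univ : Finset (Fin N)))
    (fun k b => (1 : ℝ) - if c k = b then 1 else 0)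
  rw [Fintype.piFinset_univ] at h
  simp only [agree, ← h, Finset.sum_sub_distrib, Finset.sum_ite_eq, Finset.mem_univ, if_true]
  simp

lemma sum_perm_apply_pair {K N : ℕ} (F : (Fin K → Fin N) → (Fin K → Fin N) → ℝ) {i j : Fin N}
    (hij : i ≠ j) :
    ((N : ℝ) * (N - 1)) ^ K * ∑ σ : Fin K → Equiv.Perm (Fin N),
        F (fun k => σ k i) (fun k => σ k j)
      = (N.factorial : ℝ) ^ K *
        ∑ c : Fin K → Fin N, ∑ d : Fin K → Fin N, (∏ k, (1 - agree c d k)) * F c d := by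
  set T : Finset ((Fin K → Fin N) × (Fin K → Fin N)) :=
    Finset.univ.filter fun p => ∀ k, p.1 k ≠ p.2 k with hT
  have hsum : ∀ H : (Fin K → Fin N) → (Fin K → Fin N) → ℝ, ∑ p ∈ T, H p.1 p.2
      = ∑ c : Fin K → Fin N, ∑ d : Fin K → Fin N, (∏ k, (1 - agree c d k)) * H c d := fun H => by
    rw [hT, Finset.sum_filter, Fintype.sum_prod_type]
    simp [prod_one_sub_agree]
  have hcard : (T.card : ℝ) = ((N : ℝ) * (N - 1)) ^ K := by
    have h := hsum fun _ _ => 1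
    simp only [mul_one, sum_prod_one_sub_agree] at h
    simpa [mul_pow] using h
  have h := card_mul_sum_smul_eq (G := Fin K → Equiv.Perm (Fin N)) (T := T)
    (fun g s hs => by simpa [hT] using hs)
    (fun s hs t ht => by
      simp only [hT, Finset.mem_filter, Finset.mem_univ, true_and] at hs ht
      have hp : ∀ k, ∃ g : Equiv.Perm (Fin N), g (s.1 k) = t.1 k ∧ g (s.2 k) = t.2 k := fun k => by
        obtain ⟨g, hg⟩ := Equiv.Perm.exists_extending_pair ![s.1 k, s.2 k] ![t.1 k, t.2 k]
          (by simpa [Function.Injective, Fin.forall_fin_two, eq_comm] using hs k)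
          (by simpa [Function.Injective, Fin.forall_fin_two, eq_comm] using ht k)
        exact ⟨g, by simpa using hg 0, by simpa using hg 1⟩
      choose g hg1 hg2 using hp
      exact ⟨g, Prod.ext (funext hg1) (funext hg2)⟩)
    (fun p => F p.1 p.2) (s := (fun _ => i, fun _ => j)) (by simp [hT, hij])
  rw [hsum, hcard] at h
  simpa [Fintype.card_perm, Pi.smul_def'] using h

/-- A Bonferroni inequality. -/
lemma abs_prod_one_sub_le {ι : Type*} (s : Finset ι) {e : ι → ℝ} (h0 : ∀ i, 0 ≤ e i)
    (h1 : ∀ i, e i ≤ 1) :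
    |∏ i ∈ s, (1 - e i) - 1 + ∑ i ∈ s, e i| ≤ (∑ i ∈ s, e i) ^ 2 - ∑ i ∈ s, e i ^ 2 := by
  classical
  suffices h : 0 ≤ ∏ i ∈ s, (1 - e i) - 1 + ∑ i ∈ s, e i ∧
      ∏ i ∈ s, (1 - e i) - 1 + ∑ i ∈ s, e i ≤ (∑ i ∈ s, e i) ^ 2 - ∑ i ∈ s, e i ^ 2 by
    rw [abs_of_nonneg h.1]; exact h.2
  induction s using Finset.induction_on with
  | empty => simp
  | insert a s ha ih =>
    rw [Finset.prod_insert ha, Finset.sum_insert ha, Finset.sum_insert ha]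
    have hP : ∏ i ∈ s, (1 - e i) ≤ 1 :=
      Finset.prod_le_one (fun i _ => by linarith [h1 i]) fun i _ => by linarith [h0 i]
    have hS : 0 ≤ ∑ i ∈ s, e i := Finset.sum_nonneg fun i _ => h0 i
    have ha0 := h0 a
    constructor <;> nlinarith [mul_nonneg ha0 (sub_nonneg.2 hP), mul_nonneg ha0 ih.1,
      mul_nonneg ha0 hS]

lemma sum_update_eq {K N : ℕ} (k : Fin K) (H : (Fin K → Fin N) → ℝ) :
    ∑ b : Fin N, ∑ c : Fin K → Fin N, H (Function.update c k b) = N * ∑ c, H c := by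
  have hinv : Function.Involutive fun p : Fin N × (Fin K → Fin N) =>
      (p.2 k, Function.update p.2 k p.1) := fun p => by simp
  have h := Equiv.sum_comp hinv.toPerm fun p => H p.2
  rw [Fintype.sum_prod_type, Fintype.sum_prod_type] at h
  simpa using h

lemma sum_fiber_eq {K N : ℕ} (k : Fin K) (a : Fin N) (H : (Fin K → Fin N) → ℝ) :
    N * ∑ c : Fin K → Fin N, (if c k = a then H c else 0)
      = ∑ c : Fin K → Fin N, H (Function.update c k a) := by
  rw [← sum_update_eq k, Finset.sum_comm]
  simp

lemma sum_agree_mul_agree {K N : ℕ} {k l : Fin K} (hkl : k ≠ l) (c : Fin K → Fin N) :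
    (N : ℝ) ^ 2 * ∑ d : Fin K → Fin N, agree c d k * agree c d l = (N : ℝ) ^ K := by
  have h := sum_fiber_eq k (c k) fun d => agree c d l
  have h' := sum_fiber_eq l (c l) fun _ : Fin K → Fin N => (1 : ℝ)
  simp only [agree, Function.update_of_ne hkl.symm] at h
  rw [sq, mul_assoc]
  simp only [agree, ite_mul, one_mul, zero_mul, eq_comm (a := c k)]
  rw [h]
  simp only [eq_comm (a := c l)]
  simpa using h'

lemma sum_agree_mul {K N : ℕ} (k : Fin K) (G : (Fin K → Fin N) → ℝ) :
    ∑ c, ∑ d, agree c d k * (G c * G d)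
      = ∑ a : Fin N, (∑ c : Fin K → Fin N, if c k = a then G c else 0) ^ 2 := by
  simp_rw [sq, Finset.sum_mul_sum]
  conv_rhs => rw [Finset.sum_comm]; enter [2, c]; rw [Finset.sum_comm]
  refine Finset.sum_congr rfl fun c _ => Finset.sum_congr rfl fun d _ => ?_
  simp [agree, ite_mul, mul_ite, eq_comm]

lemma abs_sum_prod_one_sub_agree_mul_le {K N : ℕ} [NeZero N] {G : (Fin K → Fin N) → ℝ} {C : ℝ}
    (hC : ∀ c, |G c| ≤ C) (hG : ∑ c, G c = 0) :
    |(∑ c, ∑ d, (∏ k, (1 - agree c d k)) * (G c * G d))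
        + ∑ k, ∑ c, ∑ d, agree c d k * (G c * G d)|
      ≤ C ^ 2 * K ^ 2 * (((N : ℝ) ^ K) ^ 2 * ((N : ℝ) ^ 2)⁻¹) := by
  have hN : (N : ℝ) ≠ 0 := Nat.cast_ne_zero.2 (NeZero.ne N)
  have hsplit : (∑ c, ∑ d, (∏ k, (1 - agree c d k)) * (G c * G d))
        + ∑ k, ∑ c, ∑ d, agree c d k * (G c * G d)
      = ∑ c, ∑ d, (∏ k, (1 - agree c d k) - 1 + ∑ k, agree c d k) * (G c * G d) := by
    have h0 : ∑ c, ∑ d, G c * G d = 0 := by rw [← Finset.sum_mul_sum, hG, zero_mul]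
    simp only [add_mul, sub_mul, one_mul, Finset.sum_add_distrib, Finset.sum_sub_distrib, h0,
      sub_zero, Finset.sum_mul]
    congr 1
    rw [Finset.sum_comm]
    exact Finset.sum_congr rfl fun c _ => Finset.sum_comm
  have hpair : ∀ c : Fin K → Fin N, ∑ d : Fin K → Fin N,
      ((∑ k, agree c d k) ^ 2 - ∑ k, agree c d k ^ 2) ≤ K ^ 2 * ((N : ℝ) ^ K * ((N : ℝ) ^ 2)⁻¹) := by
    intro c
    have : ∀ d : Fin K → Fin N, (∑ k, agree c d k) ^ 2 - ∑ k, agree c d k ^ 2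
        = ∑ k, ∑ l, if k = l then 0 else agree c d k * agree c d l := fun d => by
      rw [sq, Finset.sum_mul_sum, ← Finset.sum_sub_distrib]
      refine Finset.sum_congr rfl fun k _ => ?_
      have : ∑ l, (if k = l then agree c d k * agree c d l else 0) = agree c d k ^ 2 := by
        simp [sq]
      rw [← this, ← Finset.sum_sub_distrib]
      exact Finset.sum_congr rfl fun l _ => by split_ifs <;> simp
    simp_rw [this]
    rw [Finset.sum_comm]
    have hle : ∀ k l : Fin K, (∑ d : Fin K → Fin N, if k = l then 0 else agree c d k * agree c d l)
        ≤ (N : ℝ) ^ K * ((N : ℝ) ^ 2)⁻¹ := fun k l => by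
      split_ifs with h
      · simp; positivity
      · rw [← div_eq_mul_inv, le_div_iff₀ (by positivity), mul_comm, sum_agree_mul_agree h]
    calc _ = ∑ k, ∑ l, ∑ d : Fin K → Fin N, (if k = l then 0 else agree c d k * agree c d l) :=
          Finset.sum_congr rfl fun k _ => Finset.sum_comm
      _ ≤ ∑ _k : Fin K, ∑ _l : Fin K, (N : ℝ) ^ K * ((N : ℝ) ^ 2)⁻¹ :=
          Finset.sum_le_sum fun k _ => Finset.sum_le_sum fun l _ => hle k l
      _ = _ := by simp; ring
  rw [hsplit]
  calc _ ≤ ∑ c, ∑ d, |(∏ k, (1 - agree c d k) - 1 + ∑ k, agree c d k) * (G c * G d)| :=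
        (Finset.abs_sum_le_sum_abs _ _).trans
          (Finset.sum_le_sum fun c _ => Finset.abs_sum_le_sum_abs _ _)
    _ ≤ ∑ c, ∑ d, ((∑ k, agree c d k) ^ 2 - ∑ k, agree c d k ^ 2) * (C * C) :=
        Finset.sum_le_sum fun c _ => Finset.sum_le_sum fun d _ => abs_mul_le_of_bound
          (abs_prod_one_sub_le _ (agree_nonneg c d) (agree_le_one c d))
          (abs_mul_le_of_bound (hC c) (hC d))
    _ ≤ ∑ _c : Fin K → Fin N, (K ^ 2 * ((N : ℝ) ^ K * ((N : ℝ) ^ 2)⁻¹)) * (C * C) :=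
        Finset.sum_le_sum fun c _ => by
          rw [← Finset.sum_mul]
          exact mul_le_mul_of_nonneg_right (hpair c) (mul_self_nonneg C)
    _ = _ := by simp; ring

lemma average_closedBall_eq {α : ℝ → ℝ} {N : ℕ} (hN : 0 < N) (m : ℝ) :
    ⨍ y in Metric.closedBall ((m - 1 / 2) / N) (1 / (2 * N)), α y
      = ∫ u, α ((m - u) / N) ∂unif := by
  have hN' : (0 : ℝ) < N := by exact_mod_cast hN
  have e1 : (m - 1 / 2) / N - 1 / (2 * N) = m / N - 1 / N := by field_simp; ring
  have e2 : (m - 1 / 2) / N + 1 / (2 * N) = m / N - 0 / N := by field_simp; ring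
  rw [unif, integral_Icc_eq_integral_Ioc, ← intervalIntegral.integral_of_le zero_le_one,
    Real.closedBall_eq_Icc, e1, e2, setAverage_eq, integral_Icc_eq_integral_Ioc,
    ← intervalIntegral.integral_of_le (by simp)]
  simp_rw [sub_div _ _ (N : ℝ)]
  rw [intervalIntegral.integral_comp_sub_div _ hN'.ne']
  simp [measureReal_def]

/-- The mean square of the cell averages of a bounded function converges to its mean square. -/
lemma tendsto_mean_sq_cell_average {α : ℝ → ℝ} (hα : Measurable α) {C : ℝ} (hC : ∀ t, |α t| ≤ C) :
    Tendsto (fun N : ℕ => (N : ℝ)⁻¹ *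
        ∑ a : Fin N, (∫ u, α (((a : ℕ) + 1 - u) / N) ∂unif) ^ 2)
      atTop (nhds (∫ t, α t ^ 2 ∂unif)) := by
  set F : ℕ → ℝ → ℝ := fun N t => ∫ u, α ((⌈(N : ℝ) * t⌉ - u) / N) ∂unif with hF
  have hFm : ∀ N, Measurable (F N) := fun N =>
    (measurable_from_top (f := fun m : ℤ => ∫ u, α ((m - u) / N) ∂unif)).comp
      (Int.measurable_ceil.comp (measurable_const_mul (N : ℝ)))
  have hFC : ∀ N t, |F N t| ≤ C := fun N t => abs_integral_le_of_bound fun _ => hC _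
  have hsq : ∀ {x : ℝ}, |x| ≤ C → |x ^ 2| ≤ C ^ 2 := fun hx => by
    rw [sq, sq]; exact abs_mul_le_of_bound hx hx
  have hsum : ∀ N : ℕ, 0 < N → ∫ t, F N t ^ 2 ∂unif
      = (N : ℝ)⁻¹ * ∑ a : Fin N, (∫ u, α (((a : ℕ) + 1 - u) / N) ∂unif) ^ 2 := fun N hN => by
    have : NeZero N := ⟨hN.ne'⟩
    have hN' : (N : ℝ) ≠ 0 := by exact_mod_cast hN.ne'
    rw [integral_unif_eq_sum (N := N) ((hFm N).pow_const 2) fun t => hsq (hFC N t)]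
    congr 1
    refine Finset.sum_congr rfl fun a _ => ?_
    have hae : ∀ᵐ u ∂unif, F N (((a : ℕ) + 1 - u) / N) ^ 2
        = (∫ u, α (((a : ℕ) + 1 - u) / N) ∂unif) ^ 2 := by
      have h1 : ∀ᵐ u ∂unif, u ≠ 1 := ae_restrict_of_ae (Measure.ae_ne volume 1)
      have h2 : ∀ᵐ u ∂unif, u ∈ Icc (0 : ℝ) 1 := ae_restrict_mem measurableSet_Icc
      filter_upwards [h1, h2] with u hu1 hu
      have hc : ⌈(N : ℝ) * ((((a : ℕ) : ℝ) + 1 - u) / N)⌉ = (a : ℕ) + 1 := by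
        rw [mul_div_cancel₀ _ hN', Int.ceil_eq_iff]
        have := lt_of_le_of_ne hu.2 hu1
        push_cast
        constructor <;> linarith [hu.1]
      simp only [hF, hc]
      push_cast
      rfl
    rw [integral_congr_ae hae]
    simp
  have hlim : Tendsto (fun N => ∫ t, F N t ^ 2 ∂unif) atTop (nhds (∫ t, α t ^ 2 ∂unif)) := by
    refine tendsto_integral_of_dominated_convergence (fun _ => C ^ 2)
      (fun N => ((hFm N).pow_const 2).aestronglyMeasurable) (integrable_const _)
      (fun N => .of_forall fun t => hsq (hFC N t)) ?_
    have hloc : LocallyIntegrable α volume := by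
      refine (locallyIntegrable_const C).mono hα.aestronglyMeasurable (.of_forall fun t => ?_)
      exact (hC t).trans (le_abs_self C)
    have hδ : Tendsto (fun N : ℕ => 1 / (2 * (N : ℝ))) atTop (nhdsWithin 0 (Ioi 0)) := by
      refine tendsto_nhdsWithin_iff.2 ⟨?_, ?_⟩
      · exact tendsto_const_nhds.div_atTop
          (tendsto_natCast_atTop_atTop.const_mul_atTop two_pos)
      · filter_upwards [eventually_gt_atTop 0] with N hN
        have : (0 : ℝ) < N := by exact_mod_cast hN
        exact mem_Ioi.2 (by positivity)
    refine ae_restrict_of_ae ?_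
    filter_upwards [IsUnifLocDoublingMeasure.ae_tendsto_average volume hloc 1] with t ht
    have h := ht (fun N : ℕ => ((⌈(N : ℝ) * t⌉ : ℝ) - 1 / 2) / N) _ hδ (by
      filter_upwards [eventually_gt_atTop 0] with N hN
      have hN' : (0 : ℝ) < N := by exact_mod_cast hN
      have h1 := Int.le_ceil ((N : ℝ) * t)
      have h2 := Int.ceil_lt_add_one ((N : ℝ) * t)
      rw [one_mul, Real.closedBall_eq_Icc, mem_Icc]
      constructor
      · rw [← sub_nonneg]
        have : t - (((⌈(N : ℝ) * t⌉ : ℝ) - 1 / 2) / N - 1 / (2 * N))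
          = (N * t + 1 - ⌈(N : ℝ) * t⌉) / N := by field_simp; ring
        rw [this]
        exact div_nonneg (by linarith) hN'.le
      · rw [← sub_nonneg]
        have : ((⌈(N : ℝ) * t⌉ : ℝ) - 1 / 2) / N + 1 / (2 * N) - t
          = (⌈(N : ℝ) * t⌉ - N * t) / N := by field_simp; ring
        rw [this]
        exact div_nonneg (by linarith) hN'.le)
    refine (h.congr' ?_).pow 2
    filter_upwards [eventually_gt_atTop 0] with N hN
    exact average_closedBall_eq hN _
  refine hlim.congr' ?_
  filter_upwards [eventually_gt_atTop 0] with N hN using hsum N hN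

lemma measurable_lhsZ {K N : ℕ} (j : Fin N) :
    Measurable fun ω : LHSOmega K N => fun k => lhsZ K N ω j k := by
  unfold lhsZ
  refine measurable_pi_iff.2 fun k => ?_
  have h1 : Measurable fun ω : LHSOmega K N => ω.1 k := by fun_prop
  have h2 : Measurable fun ω : LHSOmega K N => (((ω.1 k j : Fin N) : ℕ) : ℝ) :=
    (measurable_from_top (f := fun σ : Equiv.Perm (Fin N) => (((σ j : Fin N) : ℕ) : ℝ))).comp h1
  exact ((h2.add_const 1).sub (by fun_prop)).div_const _

instance (K N : ℕ) : IsProbabilityMeasure (lhsMeasure K N) := by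
  have : IsProbabilityMeasure ((volume : Measure ℝ).restrict (Icc 0 1)) :=
    inferInstanceAs (IsProbabilityMeasure unif)
  unfold lhsMeasure
  infer_instance

lemma integral_lhsMeasure {K N : ℕ} {F : LHSOmega K N → ℝ} (hF : Measurable F) {C : ℝ}
    (hC : ∀ ω, |F ω| ≤ C) :
    ∫ ω, F ω ∂lhsMeasure K N = ((N.factorial : ℝ) ^ K)⁻¹ * ∑ σ : Fin K → Equiv.Perm (Fin N),
      ∫ u, F (σ, u) ∂(Measure.pi fun _ : Fin K => Measure.pi fun _ : Fin N => unif) := by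
  have : DiscreteMeasurableSpace (Equiv.Perm (Fin N)) := ⟨fun _ => trivial⟩
  have h := integral_pi_uniform_prod
    (ν := Measure.pi fun _ : Fin K => Measure.pi fun _ : Fin N => unif) hF hC
  rw [Fintype.card_perm, Fintype.card_fin] at h
  exact h

/-- Every point of a Latin hypercube sample is uniformly distributed. -/
lemma integral_lhsZ {K N : ℕ} {φ : (Fin K → ℝ) → ℝ} (hφ : Measurable φ) {C : ℝ}
    (hC : ∀ z, |φ z| ≤ C) (j : Fin N) :
    ∫ ω, φ (fun k => lhsZ K N ω j k) ∂lhsMeasure K N = ∫ z, φ z ∂cube K := by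
  have : NeZero N := ⟨fun h => (h ▸ j).elim0⟩
  have hN : (N : ℝ) ≠ 0 := Nat.cast_ne_zero.2 (NeZero.ne N)
  have hcol := measurePreserving_column (K := K) j
  have hcell : ∀ σ : Fin K → Equiv.Perm (Fin N),
      ∫ u, φ (fun k => lhsZ K N (σ, u) j k)
        ∂(Measure.pi fun _ : Fin K => Measure.pi fun _ : Fin N => unif)
      = cellAvg φ (fun k => σ k j) := fun σ => by
    unfold cellAvg
    have hm : Measurable fun v => φ (cellPt N (fun k => σ k j) v) :=
      hφ.comp (measurable_cellPt _)
    rw [← hcol.map_eq, integral_map hcol.aemeasurable hm.aestronglyMeasurable]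
    rfl
  have hm : Measurable fun ω : LHSOmega K N => φ (fun k => lhsZ K N ω j k) :=
    hφ.comp (measurable_lhsZ j)
  rw [integral_lhsMeasure hm fun _ => hC _, integral_cube_eq_sum (N := N) hφ hC]
  simp only [hcell]
  have h := sum_perm_apply (cellAvg φ) j
  field_simp
  linarith

lemma integral_lhsZ_mul {K N : ℕ} {g : (Fin K → ℝ) → ℝ} (hg : Measurable g) {C : ℝ}
    (hC : ∀ z, |g z| ≤ C) {i j : Fin N} (hij : i ≠ j) :
    ∫ ω, g (fun k => lhsZ K N ω i k) * g (fun k => lhsZ K N ω j k) ∂lhsMeasure K N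
      = (((N : ℝ) * (N - 1)) ^ K)⁻¹ * ∑ c : Fin K → Fin N, ∑ d : Fin K → Fin N,
        (∏ k, (1 - agree c d k)) * (cellAvg g c * cellAvg g d) := by
  have hN : 1 < N := by
    have := i.2; have := j.2
    by_contra h
    exact hij (Fin.ext (by omega))
  have hN1 : (1 : ℝ) < N := by exact_mod_cast hN
  have hcol := measurePreserving_columns (K := K) hij
  have hcell : ∀ σ : Fin K → Equiv.Perm (Fin N),
      ∫ u, g (fun k => lhsZ K N (σ, u) i k) * g (fun k => lhsZ K N (σ, u) j k)
        ∂(Measure.pi fun _ : Fin K => Measure.pi fun _ : Fin N => unif)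
      = cellAvg g (fun k => σ k i) * cellAvg g (fun k => σ k j) := fun σ => by
    unfold cellAvg
    have hm : Measurable fun v : (Fin K → ℝ) × (Fin K → ℝ) =>
        g (cellPt N (fun k => σ k i) v.1) * g (cellPt N (fun k => σ k j) v.2) :=
      ((hg.comp (measurable_cellPt _)).comp measurable_fst).mul
        ((hg.comp (measurable_cellPt _)).comp measurable_snd)
    rw [← integral_prod_mul, ← hcol.map_eq, integral_map hcol.aemeasurable hm.aestronglyMeasurable]
    rfl
  have hm : Measurable fun ω : LHSOmega K N =>
      g (fun k => lhsZ K N ω i k) * g (fun k => lhsZ K N ω j k) :=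
    (hg.comp (measurable_lhsZ i)).mul (hg.comp (measurable_lhsZ j))
  rw [integral_lhsMeasure hm fun _ => abs_mul_le_of_bound (hC _) (hC _)]
  simp only [hcell]
  have h := sum_perm_apply_pair (fun c d => cellAvg g c * cellAvg g d) hij
  have hM : ((N : ℝ) * (N - 1)) ^ K ≠ 0 := by
    have : (0 : ℝ) < N - 1 := by linarith
    positivity
  have hM' : ((N.factorial : ℝ)) ^ K ≠ 0 := by positivity
  rw [inv_mul_eq_iff_eq_mul₀ hM', mul_left_comm, ← h, inv_mul_cancel_left₀ hM]

/-- The main effect of coordinate `k`. -/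
noncomputable def mainEffect {K : ℕ} (g : (Fin K → ℝ) → ℝ) (k : Fin K) (t : ℝ) : ℝ :=
  ∫ z, g (Function.update z k t) ∂cube K

lemma measurable_mainEffect {K : ℕ} {g : (Fin K → ℝ) → ℝ} (hg : Measurable g) (k : Fin K) :
    Measurable (mainEffect g k) := by
  have hm : Measurable fun x : ℝ × (Fin K → ℝ) => g (Function.update x.2 k x.1) :=
    hg.comp (measurePreserving_update k).measurable
  exact (StronglyMeasurable.integral_prod_right (f := fun t z => g (Function.update z k t))
    hm.stronglyMeasurable).measurable

lemma abs_mainEffect_le {K : ℕ} {g : (Fin K → ℝ) → ℝ} {C : ℝ} (hC : ∀ z, |g z| ≤ C) (k : Fin K)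
    (t : ℝ) : |mainEffect g k t| ≤ C :=
  abs_integral_le_of_bound fun _ => hC _

lemma sum_cellAvg_update {K N : ℕ} [NeZero N] {g : (Fin K → ℝ) → ℝ} (hg : Measurable g) {C : ℝ}
    (hC : ∀ z, |g z| ≤ C) (k : Fin K) (a : Fin N) :
    ∑ c : Fin K → Fin N, cellAvg g (Function.update c k a)
      = (N : ℝ) ^ K * ∫ u, mainEffect g k (((a : ℕ) + 1 - u) / N) ∂unif := by
  have hN : (N : ℝ) ≠ 0 := Nat.cast_ne_zero.2 (NeZero.ne N)
  have hpt : ∀ (c : Fin K → Fin N) (u : Fin K → ℝ) (t : ℝ),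
      cellPt N (Function.update c k a) (Function.update u k t)
        = Function.update (cellPt N c u) k (((a : ℕ) + 1 - t) / N) := fun c u t => by
    ext l
    rcases eq_or_ne l k with rfl | hl
    · simp [cellPt]
    · simp [cellPt, hl]
  have hupd := (measurePreserving_update (K := K) k).measurable
  have hcell : ∀ c : Fin K → Fin N, cellAvg g (Function.update c k a)
      = ∫ t, cellAvg (fun z => g (Function.update z k (((a : ℕ) + 1 - t) / N))) c ∂unif :=
    fun c => by
      have hm : Measurable fun u => g (cellPt N (Function.update c k a) u) :=
        hg.comp (measurable_cellPt _)
      rw [cellAvg, integral_cube_update k hm fun _ => hC _]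
      simp only [hpt]
      rfl
  have hmeas : ∀ c : Fin K → Fin N,
      Measurable fun t => cellAvg (fun z => g (Function.update z k (((a : ℕ) + 1 - t) / N))) c :=
    fun c => by
      have hm : Measurable fun x : ℝ × (Fin K → ℝ) =>
          g (Function.update (cellPt N c x.2) k (((a : ℕ) + 1 - x.1) / N)) :=
        hg.comp (hupd.comp (((measurable_const.sub measurable_fst).div_const _).prodMk
          ((measurable_cellPt c).comp measurable_snd)))
      exact (StronglyMeasurable.integral_prod_right
        (f := fun t z => g (Function.update (cellPt N c z) k (((a : ℕ) + 1 - t) / N)))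
        hm.stronglyMeasurable).measurable
  simp_rw [hcell]
  rw [← integral_finsetSum _ fun c _ => integrable_of_measurable_of_bound (hmeas c)
    fun t => abs_cellAvg_le (fun _ => hC _) c, ← integral_const_mul]
  refine integral_congr_ae (.of_forall fun t => ?_)
  have h := integral_cube_eq_sum (N := N) (φ := fun z =>
    g (Function.update z k (((a : ℕ) + 1 - t) / N)))
    (hg.comp (hupd.comp measurable_prodMk_left)) fun _ => hC _
  simp only [mainEffect]
  rw [h, mul_inv_cancel_left₀ (pow_ne_zero _ hN)]

lemma sum_agree_mul_cellAvg {K N : ℕ} [NeZero N] {g : (Fin K → ℝ) → ℝ} (hg : Measurable g) {C : ℝ}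
    (hC : ∀ z, |g z| ≤ C) (k : Fin K) :
    ∑ c : Fin K → Fin N, ∑ d, agree c d k * (cellAvg g c * cellAvg g d)
      = ((N : ℝ) ^ K) ^ 2 * (N : ℝ)⁻¹ * ((N : ℝ)⁻¹ *
        ∑ a : Fin N, (∫ u, mainEffect g k (((a : ℕ) + 1 - u) / N) ∂unif) ^ 2) := by
  have hN : (N : ℝ) ≠ 0 := Nat.cast_ne_zero.2 (NeZero.ne N)
  rw [sum_agree_mul, Finset.mul_sum, Finset.mul_sum]
  refine Finset.sum_congr rfl fun a _ => ?_
  have h := sum_fiber_eq k a (cellAvg g)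
  rw [sum_cellAvg_update hg hC, mul_comm, ← eq_div_iff hN] at h
  rw [h]
  field_simp

/-- For centred `g`, the covariance of two points of a Latin hypercube sample of size `N` is
asymptotically `-1 / N` times the sum of the mean squares of the main effects. -/
lemma tendsto_mul_covariance {K : ℕ} {g : (Fin K → ℝ) → ℝ} (hg : Measurable g) {C : ℝ}
    (hC : ∀ z, |g z| ≤ C) (hg0 : ∫ z, g z ∂cube K = 0) :
    Tendsto (fun N : ℕ => ((N : ℝ) - 1) * ((((N : ℝ) * (N - 1)) ^ K)⁻¹ *
        ∑ c : Fin K → Fin N, ∑ d : Fin K → Fin N,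
          (∏ k, (1 - agree c d k)) * (cellAvg g c * cellAvg g d)))
      atTop (nhds (-∑ k, ∫ t, mainEffect g k t ^ 2 ∂unif)) := by
  set W : ℕ → ℝ := fun N => ∑ c : Fin K → Fin N, ∑ d : Fin K → Fin N,
    (∏ k, (1 - agree c d k)) * (cellAvg g c * cellAvg g d) with hW
  set M : ℕ → ℝ := fun N => ∑ k, ((N : ℝ)⁻¹ *
    ∑ a : Fin N, (∫ u, mainEffect g k (((a : ℕ) + 1 - u) / N) ∂unif) ^ 2) with hM
  have hMlim : Tendsto M atTop (nhds (∑ k, ∫ t, mainEffect g k t ^ 2 ∂unif)) :=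
    tendsto_finsetSum _ fun k _ =>
      tendsto_mean_sq_cell_average (measurable_mainEffect hg k) (abs_mainEffect_le hC k)
  have hinv : Tendsto (fun N : ℕ => (N : ℝ)⁻¹) atTop (nhds 0) := tendsto_inv_atTop_nhds_zero_nat
  have hbound : ∀ N : ℕ, 0 < N →
      |N * ((((N : ℝ) ^ K) ^ 2)⁻¹ * W N) + M N| ≤ C ^ 2 * K ^ 2 * (N : ℝ)⁻¹ := fun N hN => by
    have : NeZero N := ⟨hN.ne'⟩
    have hN' : (0 : ℝ) < N := by exact_mod_cast hN
    have hG : ∑ c : Fin K → Fin N, cellAvg g c = 0 := by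
      have h := integral_cube_eq_sum (N := N) hg hC
      rw [hg0] at h
      exact (mul_eq_zero.1 h.symm).resolve_left (by positivity)
    have h := abs_sum_prod_one_sub_agree_mul_le (abs_cellAvg_le hC) hG
    simp only [sum_agree_mul_cellAvg hg hC, ← Finset.mul_sum] at h
    have hpos : (0 : ℝ) < N * (((N : ℝ) ^ K) ^ 2)⁻¹ := by positivity
    have e : N * ((((N : ℝ) ^ K) ^ 2)⁻¹ * W N) + M N
        = N * (((N : ℝ) ^ K) ^ 2)⁻¹ * (W N + ((N : ℝ) ^ K) ^ 2 * (N : ℝ)⁻¹ * M N) := by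
      field_simp
    rw [e, abs_mul, abs_of_pos hpos]
    refine (mul_le_mul_of_nonneg_left ?_ hpos.le).trans_eq (b := N * (((N : ℝ) ^ K) ^ 2)⁻¹ *
      (C ^ 2 * K ^ 2 * (((N : ℝ) ^ K) ^ 2 * ((N : ℝ) ^ 2)⁻¹))) ?_
    · simpa only [hW, hM, Finset.mul_sum] using h
    · field_simp
  have hsum0 : Tendsto (fun N : ℕ => N * ((((N : ℝ) ^ K) ^ 2)⁻¹ * W N) + M N) atTop (nhds 0) := by
    refine squeeze_zero_norm' ?_ (by simpa using hinv.const_mul (C ^ 2 * K ^ 2 : ℝ))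
    filter_upwards [eventually_gt_atTop 0] with N hN using hbound N hN
  have hW' := hsum0.sub hMlim
  simp only [add_sub_cancel_right, zero_sub] at hW'
  have hratio : Tendsto (fun N : ℕ => 1 - (N : ℝ)⁻¹) atTop (nhds 1) := by
    simpa using hinv.const_sub 1
  have hfinal := (hratio.mul ((hratio.inv₀ one_ne_zero).pow K)).mul hW'
  simp only [inv_one, one_pow, one_mul] at hfinal
  refine hfinal.congr' ?_
  filter_upwards [eventually_gt_atTop 1] with N hN
  have hN1 : (1 : ℝ) < N := by exact_mod_cast hN
  have h1 : (0 : ℝ) < N - 1 := by linarith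
  have h2 : 1 - (N : ℝ)⁻¹ = (N - 1) / N := by field_simp
  rw [h2, inv_div, div_pow, mul_pow]
  change _ = _ * (_ * W N)
  field_simp

lemma integral_mainEffect {K : ℕ} {g : (Fin K → ℝ) → ℝ} (hg : Measurable g) {C : ℝ}
    (hC : ∀ z, |g z| ≤ C) (k : Fin K) :
    ∫ t, mainEffect g k t ∂unif = ∫ z, g z ∂cube K :=
  (integral_cube_update k hg hC).symm

lemma integral_mul_mainEffect {K : ℕ} {g : (Fin K → ℝ) → ℝ} (hg : Measurable g) {C : ℝ}
    (hC : ∀ z, |g z| ≤ C) (k : Fin K) :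
    ∫ z, g z * mainEffect g k (z k) ∂cube K = ∫ t, mainEffect g k t ^ 2 ∂unif := by
  have hm : Measurable fun z : Fin K → ℝ => g z * mainEffect g k (z k) :=
    hg.mul ((measurable_mainEffect hg k).comp (measurable_pi_apply k))
  rw [integral_cube_update k hm fun _ => abs_mul_le_of_bound (hC _) (abs_mainEffect_le hC k _)]
  simp [integral_mul_const, sq, mainEffect]

lemma integral_mainEffect_mul {K : ℕ} {g : (Fin K → ℝ) → ℝ} (hg : Measurable g) {C : ℝ}
    (hC : ∀ z, |g z| ≤ C) (hg0 : ∫ z, g z ∂cube K = 0) (k l : Fin K) :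
    ∫ z, mainEffect g k (z k) * mainEffect g l (z l) ∂cube K
      = if k = l then ∫ t, mainEffect g k t ^ 2 ∂unif else 0 := by
  have hm : ∀ k, Measurable fun z : Fin K → ℝ => mainEffect g k (z k) := fun k =>
    (measurable_mainEffect hg k).comp (measurable_pi_apply k)
  have hm2 : Measurable fun z : Fin K → ℝ => mainEffect g k (z k) * mainEffect g l (z l) :=
    (hm k).mul (hm l)
  rw [integral_cube_update k hm2 fun _ => abs_mul_le_of_bound (abs_mainEffect_le hC k _) (abs_mainEffect_le hC l _)]
  split_ifs with h
  · subst h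
    simp [sq]
  · simp [Function.update_of_ne (Ne.symm h), integral_const_mul, integral_mul_const,
      integral_mainEffect hg hC, hg0]

/-- Orthogonality of the main effects and the residual. -/
lemma integral_sq_residual {K : ℕ} {g : (Fin K → ℝ) → ℝ} (hg : Measurable g) {C : ℝ}
    (hC : ∀ z, |g z| ≤ C) (hg0 : ∫ z, g z ∂cube K = 0) :
    ∫ z, (g z - ∑ k, mainEffect g k (z k)) ^ 2 ∂cube K
      = ∫ z, g z ^ 2 ∂cube K - ∑ k, ∫ t, mainEffect g k t ^ 2 ∂unif := by
  have hm : ∀ k, Measurable fun z : Fin K → ℝ => mainEffect g k (z k) := fun k =>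
    (measurable_mainEffect hg k).comp (measurable_pi_apply k)
  have hi0 : Integrable (fun z => g z ^ 2) (cube K) := by
    simp only [sq]
    exact integrable_of_measurable_of_bound (hg.mul hg) fun _ => abs_mul_le_of_bound (hC _) (hC _)
  have hi1 : ∀ k, Integrable (fun z => g z * mainEffect g k (z k)) (cube K) := fun k =>
    integrable_of_measurable_of_bound (hg.mul (hm k))
      fun _ => abs_mul_le_of_bound (hC _) (abs_mainEffect_le hC k _)
  have hi2 : ∀ k l, Integrable (fun z : Fin K → ℝ => mainEffect g k (z k) * mainEffect g l (z l))
      (cube K) := fun k l => integrable_of_measurable_of_bound ((hm k).mul (hm l))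
      fun _ => abs_mul_le_of_bound (abs_mainEffect_le hC k _) (abs_mainEffect_le hC l _)
  have hexp : ∀ z, (g z - ∑ k, mainEffect g k (z k)) ^ 2
      = g z ^ 2 - 2 * ∑ k, g z * mainEffect g k (z k)
        + ∑ k, ∑ l, mainEffect g k (z k) * mainEffect g l (z l) := fun z => by
    rw [← Finset.sum_mul_sum, ← Finset.mul_sum]
    ring
  have hj1 := integrable_finsetSum Finset.univ fun k _ => hi1 k
  have hj2 := integrable_finsetSum Finset.univ fun k _ =>
    integrable_finsetSum Finset.univ fun l _ => hi2 k l
  have hj3 : Integrable (fun z => g z ^ 2 - 2 * ∑ k, g z * mainEffect g k (z k)) (cube K) :=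
    hi0.sub (hj1.const_mul 2)
  simp_rw [hexp]
  rw [integral_add hj3 hj2, integral_sub hi0 (hj1.const_mul 2),
    integral_const_mul, integral_finsetSum _ fun k _ => hi1 k,
    integral_finsetSum _ fun k _ => integrable_finsetSum Finset.univ fun l _ => hi2 k l]
  simp_rw [integral_finsetSum Finset.univ fun l _ => hi2 _ l, integral_mul_mainEffect hg hC,
    integral_mainEffect_mul hg hC hg0]
  simp
  ring

lemma mul_variance_lhs {K N : ℕ} (hN : 0 < N) {h : (Fin K → ℝ) → ℝ} (hh : Measurable h) {C : ℝ}
    (hC : ∀ z, |h z| ≤ C) {τ : ℝ} (hτ : τ = ∫ z, h z ∂cube K) :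
    (N : ℝ) * variance
        (fun ω : LHSOmega K N => (N : ℝ)⁻¹ * ∑ j : Fin N, h (fun k => lhsZ K N ω j k))
        (lhsMeasure K N)
      = ∫ z, (h z - τ) ^ 2 ∂cube K + ((N : ℝ) - 1) * ((((N : ℝ) * (N - 1)) ^ K)⁻¹ *
        ∑ c : Fin K → Fin N, ∑ d : Fin K → Fin N, (∏ k, (1 - agree c d k)) *
          (cellAvg (fun z => h z - τ) c * cellAvg (fun z => h z - τ) d)) := by
  have hN' : (0 : ℝ) < N := by exact_mod_cast hN
  have hZ : ∀ j : Fin N, Measurable fun ω : LHSOmega K N => h (fun k => lhsZ K N ω j k) :=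
    fun j => hh.comp (measurable_lhsZ j)
  have hi := fun j : Fin N => integrable_of_measurable_of_bound (μ := lhsMeasure K N) (hZ j)
    fun _ => hC _
  have hmean : ∫ ω, (N : ℝ)⁻¹ * ∑ j : Fin N, h (fun k => lhsZ K N ω j k) ∂lhsMeasure K N = τ := by
    rw [integral_const_mul, integral_finsetSum _ fun j _ => hi j]
    simp_rw [integral_lhsZ hh hC, ← hτ]
    simp [hN'.ne']
  have hg : Measurable fun z => h z - τ := hh.sub_const τ
  have hgC : ∀ z, |h z - τ| ≤ C + |τ| := fun z => (abs_sub _ _).trans (by linarith [hC z])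
  have hgZ : ∀ j : Fin N, Measurable fun ω : LHSOmega K N => h (fun k => lhsZ K N ω j k) - τ :=
    fun j => (hZ j).sub_const τ
  have hexp : ∀ ω : LHSOmega K N, ((N : ℝ)⁻¹ * ∑ j : Fin N, h (fun k => lhsZ K N ω j k) - τ) ^ 2
      = (N : ℝ)⁻¹ ^ 2 * ∑ i : Fin N, ∑ j : Fin N,
        (h (fun k => lhsZ K N ω i k) - τ) * (h (fun k => lhsZ K N ω j k) - τ) := fun ω => by
    rw [← Finset.sum_mul_sum]
    simp only [Finset.sum_sub_distrib, Finset.sum_const, Finset.card_univ, Fintype.card_fin,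
      nsmul_eq_mul]
    field_simp
  have hi2 : ∀ i j : Fin N, Integrable (fun ω : LHSOmega K N =>
      (h (fun k => lhsZ K N ω i k) - τ) * (h (fun k => lhsZ K N ω j k) - τ)) (lhsMeasure K N) :=
    fun i j => integrable_of_measurable_of_bound ((hgZ i).mul (hgZ j))
      fun _ => abs_mul_le_of_bound (hgC _) (hgC _)
  rw [variance_eq_integral
    ((Finset.measurable_sum _ fun j _ => hZ j).const_mul _).aemeasurable, hmean]
  simp_rw [hexp]
  rw [integral_const_mul, integral_finsetSum _ fun i _ => integrable_finsetSum _ fun j _ => hi2 i j]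
  simp_rw [integral_finsetSum Finset.univ fun j _ => hi2 _ j]
  set E := (((N : ℝ) * (N - 1)) ^ K)⁻¹ *
        ∑ c : Fin K → Fin N, ∑ d : Fin K → Fin N, (∏ k, (1 - agree c d k)) *
          (cellAvg (fun z => h z - τ) c * cellAvg (fun z => h z - τ) d) with hE
  have hpair : ∀ i j : Fin N, ∫ ω, (h (fun k => lhsZ K N ω i k) - τ) *
      (h (fun k => lhsZ K N ω j k) - τ) ∂lhsMeasure K N
      = (if i = j then ∫ z, (h z - τ) ^ 2 ∂cube K - E else 0) + E := fun i j => by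
    split_ifs with hij
    · subst hij
      rw [sub_add_cancel]
      simp_rw [sq]
      exact integral_lhsZ (hg.mul hg) (fun _ => abs_mul_le_of_bound (hgC _) (hgC _)) i
    · rw [zero_add]
      exact integral_lhsZ_mul hg hgC hij
  simp_rw [hpair, Finset.sum_add_distrib]
  simp
  field_simp
  ring

/-- **Asymptotic variance of the Latin hypercube estimator (Stein 1987).** For bounded,
a.e. continuous (Riemann-integrable) `h* : [0,1]^K → ℝ` with mean `τ`, main effects `α_k`
and residual `r`, the LHS estimator `τ̂ = N⁻¹ Σ_j h*(Z_j)` satisfies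
`Var(τ̂) = N⁻¹ ∫ r² + o(1/N)`, i.e. `N · Var(τ̂) → ∫ r²`. Moreover
`N · Var_SRS(τ̂) → ∫ (h*-τ)² = ∫ r² + Σ_k ∫ α_k²`, so asymptotically LHS beats simple
random sampling, strictly unless all main effects vanish. -/
theorem stmt_16 (K : ℕ) (h : (Fin K → ℝ) → ℝ) (hmeas : Measurable h)
    (hbdd : ∃ C, ∀ z, |h z| ≤ C)
    (hcont : ∀ᵐ z ∂(cube K), ContinuousAt h z)
    (τ : ℝ) (hτ : τ = ∫ z, h z ∂(cube K))
    (α : Fin K → ℝ → ℝ)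
    (hα : ∀ k t, α k t = ∫ z, (h (Function.update z k t) - τ) ∂(cube K))
    (r : (Fin K → ℝ) → ℝ)
    (hr : ∀ z, r z = h z - τ - ∑ k, α k (z k)) :
    Tendsto (fun N : ℕ => (N : ℝ) * variance
        (fun ω : LHSOmega K N => (N : ℝ)⁻¹ * ∑ j : Fin N, h (fun k => lhsZ K N ω j k))
        (lhsMeasure K N))
      atTop (nhds (∫ z, (r z)^2 ∂(cube K))) ∧
    (∫ z, (h z - τ)^2 ∂(cube K)
      = (∫ z, (r z)^2 ∂(cube K)) + ∑ k, ∫ t, (α k t)^2 ∂unif) ∧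
    ((∃ k, 0 < ∫ t, (α k t)^2 ∂unif) →
      ∫ z, (r z)^2 ∂(cube K) < ∫ z, (h z - τ)^2 ∂(cube K)) := by
  obtain ⟨C, hC⟩ := hbdd
  have hg : Measurable fun z => h z - τ := hmeas.sub_const τ
  have hgC : ∀ z, |h z - τ| ≤ C + |τ| := fun z => (abs_sub _ _).trans (by linarith [hC z])
  have hg0 : ∫ z, (h z - τ) ∂cube K = 0 := by
    rw [integral_sub (integrable_of_measurable_of_bound hmeas hC) (integrable_const _), ← hτ]
    simp
  obtain rfl : α = mainEffect fun z => h z - τ := funext fun k => funext fun t => hα k t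
  have hres : ∫ z, (r z) ^ 2 ∂cube K = ∫ z, (h z - τ) ^ 2 ∂cube K
      - ∑ k, ∫ t, (mainEffect (fun z => h z - τ) k t) ^ 2 ∂unif := by
    simp_rw [hr]
    exact integral_sq_residual hg hgC hg0
  refine ⟨?_, by rw [hres, sub_add_cancel], ?_⟩
  · rw [hres, sub_eq_add_neg]
    refine ((tendsto_mul_covariance hg hgC hg0).const_add _).congr' ?_
    filter_upwards [eventually_gt_atTop 0] with N hN
    exact (mul_variance_lhs hN hmeas hC hτ).symm
  · rintro ⟨k, hk⟩
    rw [hres, sub_lt_self_iff]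
    exact Finset.sum_pos' (fun l _ => integral_nonneg fun t => sq_nonneg _)
      ⟨k, Finset.mem_univ k, hk⟩
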